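/- arXiv:2203.08767 — 2 statements merged into one kernel-verified Lean document; each statement's English description precedes it below -/
import Mathlib

section
/- Fix 0 < R < Q and 0 < w < 1, set a = w/(πR²) and b = (1−w)/(π(Q²−R²)), assume a < b, and let μ be the measure on the Euclidean plane with density f with respect to 2-dimensional Lebesgue measure, where f(p) = a if ‖p‖ < R, f(p) = b if R ≤ ‖p‖ ≤ Q, and f(p) = 0 if ‖p‖ > Q. Suppose 0 < s ≤ (Q − R)/2, and let ν_s(c) = μ(B(p_c,s)) for c ∈ [0,Q]. Then: (i) ν_s is constant on [0, |R − s|]; (ii) ν_s is strictly increasing on [|R − s|, R + s]; (iii) ν_s is constant on [R + s, Q − s], where it attains its maximum over [0,Q]; and (iv) ν_s is strictly decreasing on [Q − s, Q]. -/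
/-!
Since closed and open balls agree up to null sets, the mass of the ball of radius `s` about `p` is
`b * |B_s(p) ∩ B_Q(0)| - (b - a) * |B_s(p) ∩ B_R(0)|`, with both coefficients positive, so
everything reduces to the overlap `|B_s(p) ∩ B_r(0)|` of two balls. It is constant while one ball
contains the other and zero once they are disjoint. In between it strictly decreases as `p` moves
outwards along a ray: if `q` is further out than `p`, the point reflection `x ↦ p + q - x`
exchanges `B_s(p)` and `B_s(q)` and carries `(B_s(q) \ B_s(p)) ∩ B_r(0)` into
`(B_s(p) \ B_s(q)) ∩ B_r(0)`, missing a nonempty open set.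
-/

open Set MeasureTheory Metric

/-- The point `(c, 0)` in the Euclidean plane. -/
noncomputable def pc (c : ℝ) : EuclideanSpace ℝ (Fin 2) :=
  (WithLp.equiv 2 (Fin 2 → ℝ)).symm ![c, 0]

lemma measure_lt_of_preimage_sdiff_subset {α : Type*} [MeasurableSpace α] {μ : Measure α}
    {σ : α → α} (hσ : MeasurePreserving σ μ μ) {S T : Set α} (hS : MeasurableSet S)
    (hT : MeasurableSet T) (hSfin : μ S ≠ ⊤) (hsub : σ ⁻¹' (T \ S) ⊆ S \ T)
    (hne : μ ((S \ T) \ σ ⁻¹' (T \ S)) ≠ 0) : μ T < μ S := by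
  have hTS : MeasurableSet (T \ S) := hT.diff hS
  have hlt : μ (T \ S) < μ (S \ T) := by
    have hfin : μ (σ ⁻¹' (T \ S)) ≠ ⊤ :=
      measure_ne_top_of_subset (hsub.trans sdiff_subset) hSfin
    rw [measure_sdiff hsub (hσ.measurable hTS).nullMeasurableSet hfin, ← pos_iff_ne_zero,
      tsub_pos_iff_lt, hσ.measure_preimage hTS.nullMeasurableSet] at hne
    exact hne
  calc μ T = μ (S ∩ T) + μ (T \ S) := by rw [inter_comm, measure_inter_add_sdiff T hS]
    _ < μ (S ∩ T) + μ (S \ T) :=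
      ENNReal.add_lt_add_left (measure_ne_top_of_subset inter_subset_left hSfin) hlt
    _ = μ S := measure_inter_add_sdiff S hT

lemma closedBall_ae_eq_ball {E : Type*} [NormedAddCommGroup E] [NormedSpace ℝ E]
    [FiniteDimensional ℝ E] [Nontrivial E] [MeasurableSpace E] [BorelSpace E] {m : Measure E}
    [m.IsAddHaarMeasure] (x : E) (r : ℝ) : closedBall x r =ᵐ[m] ball x r :=
  (ae_eq_of_subset_of_measure_ge ball_subset_closedBall
    (Measure.addHaar_closedBall_eq_addHaar_ball m x r).le measurableSet_ball.nullMeasurableSet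
    measure_closedBall_lt_top.ne).symm

section Reflection

variable {E : Type*} [NormedAddCommGroup E] [InnerProductSpace ℝ E] {e : E} {c d r s : ℝ}

lemma norm_le_norm_add_smul_sub {x : E} (h0 : 0 ≤ c + d) (hcd : c < d)
    (hx : ‖x - c • e‖ ≤ ‖x - d • e‖) : ‖x‖ ≤ ‖(c + d) • e - x‖ := by
  rw [← sq_le_sq₀ (norm_nonneg _) (norm_nonneg _)] at hx ⊢
  simp only [norm_sub_sq_real, norm_smul, inner_smul_left, inner_smul_right, mul_pow,
    Real.norm_eq_abs, sq_abs, RCLike.conj_to_real, real_inner_comm x e] at hx ⊢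
  have hproj : 0 ≤ (c + d) * ‖e‖ ^ 2 - 2 * inner ℝ x e :=
    nonneg_of_mul_nonneg_right (by linarith) (sub_pos.2 hcd)
  linarith [mul_nonneg h0 hproj]

lemma nonempty_ball_inter_ball_sdiff_closedBall (he : ‖e‖ = 1) (hc : |r - s| ≤ c)
    (hcd : c < d) (hd : d ≤ r + s) :
    ((ball (c • e) s ∩ ball 0 r) \
      (closedBall (d • e) s ∪ closedBall ((c + d) • e) r)).Nonempty := by
  obtain ⟨hsr, hrs⟩ := abs_le.1 hc
  obtain ⟨t, hct, ht⟩ : ∃ t, c - s < t ∧ t < min (d - s) (c + d - r) :=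
    exists_between (lt_min (by linarith) (by linarith))
  obtain ⟨htd, htr⟩ := lt_min_iff.1 ht
  have hnorm (u : ℝ) : ‖u • e‖ = |u| := by rw [norm_smul, he, mul_one, Real.norm_eq_abs]
  refine ⟨t • e, ?_⟩
  simp only [mem_sdiff, mem_inter_iff, mem_union, mem_ball, mem_closedBall, dist_eq_norm, sub_zero,
    ← sub_smul, hnorm, not_or, not_le, abs_lt, lt_abs]
  exact ⟨⟨⟨by linarith, by linarith [htr]⟩, by linarith, by linarith [htd]⟩,
    .inr (by linarith [htd]), .inr (by linarith [htr])⟩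

end Reflection

/-- The measure of the intersection of the ball of radius `s` about `p` with the ball of radius `r`
about the origin; in the plane and for Lebesgue measure, the area of a lens. -/
noncomputable def ballOverlap {E : Type*} [NormedAddCommGroup E] [MeasurableSpace E]
    (m : Measure E) (p : E) (s r : ℝ) : ℝ :=
  m.real (ball p s ∩ ball 0 r)

namespace ballOverlap

variable {E : Type*} [NormedAddCommGroup E] [MeasurableSpace E] {m : Measure E} {p : E} {r s : ℝ}

lemma nonneg : 0 ≤ ballOverlap m p s r := measureReal_nonneg

lemma eq_zero_of_add_le_norm (h : r + s ≤ ‖p‖) : ballOverlap m p s r = 0 := by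
  rw [ballOverlap, (ball_disjoint_ball (by rw [dist_zero_right]; linarith)).inter_eq,
    measureReal_empty]

variable [BorelSpace E] [m.IsAddHaarMeasure]

lemma eq_of_norm_le_abs_sub (h : ‖p‖ ≤ |r - s|) :
    ballOverlap m p s r = m.real (ball 0 (min r s)) := by
  rcases le_total s r with hsr | hrs
  · have hsub : ball p s ⊆ ball 0 r :=
      ball_subset_ball' (by rw [dist_zero_right]; linarith [abs_of_nonneg (sub_nonneg.2 hsr)])
    rw [ballOverlap, inter_eq_self_of_subset_left hsub, min_eq_right hsr,
      Measure.addHaar_real_ball_center]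
  · have hsub : ball 0 r ⊆ ball p s :=
      ball_subset_ball' (by rw [dist_zero_left]; linarith [abs_of_nonpos (sub_nonpos.2 hrs)])
    rw [ballOverlap, inter_eq_self_of_subset_right hsub, min_eq_left hrs]

lemma le_measureReal_ball [ProperSpace E] : ballOverlap m p s r ≤ m.real (ball 0 s) := by
  rw [← Measure.addHaar_real_ball_center m p]
  exact measureReal_mono inter_subset_left measure_ball_lt_top.ne

lemma strictAntiOn [InnerProductSpace ℝ E] [FiniteDimensional ℝ E] {e : E} (he : ‖e‖ = 1) :
    StrictAntiOn (fun c : ℝ => ballOverlap m (c • e) s r) (Icc |r - s| (r + s)) := by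
  intro c hc d hd hcd
  have h0 : 0 ≤ c + d := by linarith [abs_nonneg (r - s), hc.1]
  let σ := IsometryEquiv.subLeft ((c + d) • e)
  have hσ : MeasurePreserving σ m m := Measure.measurePreserving_sub_left m _
  have hpre : σ ⁻¹' ((ball (d • e) s ∩ ball 0 r) \ (ball (c • e) s ∩ ball 0 r)) =
      (ball (c • e) s \ ball (d • e) s) ∩ ball ((c + d) • e) r := by
    rw [← inter_sdiff_distrib_right]
    simp [σ, IsometryEquiv.preimage_ball, add_smul]
  have hfin : m (ball (c • e) s ∩ ball 0 r) ≠ ⊤ :=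
    measure_ne_top_of_subset inter_subset_left measure_ball_lt_top.ne
  refine ENNReal.toReal_strict_mono hfin <| measure_lt_of_preimage_sdiff_subset hσ
    (measurableSet_ball.inter measurableSet_ball) (measurableSet_ball.inter measurableSet_ball)
    hfin ?_ ?_
  · rw [hpre, ← inter_sdiff_distrib_right]
    rintro x ⟨⟨hxc, hxd⟩, hxr⟩
    rw [mem_ball_iff_norm] at hxc hxd
    rw [mem_ball_iff_norm'] at hxr
    have hx := norm_le_norm_add_smul_sub h0 hcd (hxc.le.trans (not_lt.1 hxd))
    exact ⟨⟨mem_ball_iff_norm.2 hxc, mt mem_ball_iff_norm.1 hxd⟩,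
      mem_ball_zero_iff.2 (hx.trans_lt hxr)⟩
  · have hopen : IsOpen ((ball (c • e) s ∩ ball 0 r) \
        (closedBall (d • e) s ∪ closedBall ((c + d) • e) r)) :=
      (isOpen_ball.inter isOpen_ball).sdiff (isClosed_closedBall.union isClosed_closedBall)
    refine ((hopen.measure_pos m
      (nonempty_ball_inter_ball_sdiff_closedBall he hc.1 hcd hd.2)).trans_le (measure_mono ?_)).ne'
    rw [hpre, ← inter_sdiff_distrib_right]
    rintro x ⟨⟨hxc, hx0⟩, hx⟩
    exact ⟨⟨⟨hxc, fun hxd => hx (.inl (ball_subset_closedBall hxd))⟩, hx0⟩,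
      fun hxr => hx (.inr (ball_subset_closedBall hxr.2))⟩

end ballOverlap

/-- The measure `W(R, Q, w)` with its two densities as parameters: density `a` with respect to `m`
on the open ball of radius `R` about the origin, and `b` on the rest of the closed ball of radius
`Q`. Negative `a` and `b` count as zero. -/
noncomputable def weightedAnnulus {E : Type*} [NormedAddCommGroup E] [MeasurableSpace E]
    (m : Measure E) (R Q a b : ℝ) : Measure E :=
  m.withDensity fun p =>
    if ‖p‖ < R then ENNReal.ofReal a else if ‖p‖ ≤ Q then ENNReal.ofReal b else 0

section WeightedAnnulus

variable {E : Type*} [NormedAddCommGroup E] [MeasurableSpace E] [BorelSpace E] {m : Measure E}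
  {R Q a b : ℝ}

lemma weightedAnnulus_eq_smul_restrict_add : weightedAnnulus m R Q a b =
    ENNReal.ofReal a • m.restrict (ball 0 R) +
      ENNReal.ofReal b • m.restrict (closedBall 0 Q \ ball 0 R) := by
  have hinner : MeasurableSet (ball (0 : E) R) := measurableSet_ball
  have houter : MeasurableSet (closedBall (0 : E) Q \ ball 0 R) :=
    measurableSet_closedBall.diff hinner
  rw [← withDensity_const, ← withDensity_const, ← withDensity_indicator hinner,
    ← withDensity_indicator houter,
    ← withDensity_add_left (measurable_const.indicator hinner), weightedAnnulus]
  congr 1 with p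
  by_cases hR : ‖p‖ < R <;> by_cases hQ : ‖p‖ ≤ Q <;> simp [hR, hQ]

variable [NormedSpace ℝ E] [FiniteDimensional ℝ E] [Nontrivial E] [m.IsAddHaarMeasure]

lemma weightedAnnulus_real_ball (hRQ : R ≤ Q) (ha : 0 ≤ a) (hb : 0 ≤ b) (p : E)
    (s : ℝ) : (weightedAnnulus m R Q a b).real (ball p s) =
      b * ballOverlap m p s Q - (b - a) * ballOverlap m p s R := by
  have hfin (A : Set E) : m (ball p s ∩ A) ≠ ⊤ :=
    measure_ne_top_of_subset inter_subset_left measure_ball_lt_top.ne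
  have hinner : MeasurableSet (ball (0 : E) R) := measurableSet_ball
  have houter : MeasurableSet (closedBall (0 : E) Q \ ball 0 R) :=
    measurableSet_closedBall.diff hinner
  have hsub : ball (0 : E) R ⊆ closedBall 0 Q :=
    ball_subset_closedBall.trans (closedBall_subset_closedBall hRQ)
  have hQ : m.real (ball p s ∩ closedBall 0 Q) = ballOverlap m p s Q :=
    measureReal_congr ((ae_eq_refl _).inter (closedBall_ae_eq_ball 0 Q))
  have hshell : m.real (ball p s ∩ (closedBall 0 Q \ ball 0 R)) =
      ballOverlap m p s Q - ballOverlap m p s R := by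
    rw [inter_sdiff_distrib_left, measureReal_sdiff (inter_subset_inter_right _ hsub)
      (measurableSet_ball.inter hinner) (hfin _), hQ, ← ballOverlap]
  have hpart (κ : ℝ) (A : Set E) : (ENNReal.ofReal κ • m.restrict A) (ball p s) ≠ ⊤ :=
    ENNReal.mul_ne_top ENNReal.ofReal_ne_top measure_ball_lt_top.ne
  rw [weightedAnnulus_eq_smul_restrict_add, measureReal_add_apply (hpart _ _) (hpart _ _),
    measureReal_ennreal_smul_apply, measureReal_ennreal_smul_apply,
    measureReal_restrict_apply' hinner, measureReal_restrict_apply' houter, hshell,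
    ENNReal.toReal_ofReal ha, ENNReal.toReal_ofReal hb, ← ballOverlap]
  ring

variable {p : E} {s : ℝ}

lemma weightedAnnulus_real_ball_of_norm_add_le (hRQ : R ≤ Q) (ha : 0 ≤ a)
    (hb : 0 ≤ b) (hp : ‖p‖ + s ≤ Q) : (weightedAnnulus m R Q a b).real (ball p s) =
      b * m.real (ball 0 s) - (b - a) * ballOverlap m p s R := by
  rw [weightedAnnulus_real_ball hRQ ha hb,
    ballOverlap.eq_of_norm_le_abs_sub ((le_sub_iff_add_le.2 hp).trans (le_abs_self _)),
    min_eq_right (by linarith [norm_nonneg p])]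

lemma weightedAnnulus_real_ball_of_add_le_norm (hRQ : R ≤ Q) (ha : 0 ≤ a)
    (hb : 0 ≤ b) (hp : R + s ≤ ‖p‖) :
    (weightedAnnulus m R Q a b).real (ball p s) = b * ballOverlap m p s Q := by
  rw [weightedAnnulus_real_ball hRQ ha hb, ballOverlap.eq_zero_of_add_le_norm hp, mul_zero,
    sub_zero]

lemma weightedAnnulus_real_ball_le (hRQ : R ≤ Q) (ha : 0 ≤ a) (hab : a ≤ b) :
    (weightedAnnulus m R Q a b).real (ball p s) ≤ b * m.real (ball 0 s) := by
  have hb : 0 ≤ b := ha.trans hab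
  calc (weightedAnnulus m R Q a b).real (ball p s)
    _ = b * ballOverlap m p s Q - (b - a) * ballOverlap m p s R :=
      weightedAnnulus_real_ball hRQ ha hb p s
    _ ≤ b * ballOverlap m p s Q :=
      sub_le_self _ (mul_nonneg (sub_nonneg.2 hab) ballOverlap.nonneg)
    _ ≤ b * m.real (ball 0 s) := mul_le_mul_of_nonneg_left ballOverlap.le_measureReal_ball hb

end WeightedAnnulus

theorem weighted_annulus_nu_small_s_general {E : Type*} [NormedAddCommGroup E]
    [InnerProductSpace ℝ E] [FiniteDimensional ℝ E] [MeasurableSpace E] [BorelSpace E]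
    {m : Measure E} [m.IsAddHaarMeasure] {e : E} (he : ‖e‖ = 1) {R Q a b s : ℝ} (hR : 0 ≤ R)
    (ha : 0 ≤ a) (hab : a < b) (hs0 : 0 ≤ s) (hs : s ≤ (Q - R) / 2) {ν : ℝ → ℝ}
    (hν : ∀ c, ν c = (weightedAnnulus m R Q a b).real (ball (c • e) s)) :
    (∀ c₁ ∈ Icc (0:ℝ) |R - s|, ∀ c₂ ∈ Icc (0:ℝ) |R - s|, ν c₁ = ν c₂) ∧
    StrictMonoOn ν (Icc |R - s| (R + s)) ∧
    (∀ c₁ ∈ Icc (R + s) (Q - s), ∀ c₂ ∈ Icc (R + s) (Q - s), ν c₁ = ν c₂) ∧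
    (∀ c ∈ Icc (0:ℝ) Q, ν c ≤ ν (R + s)) ∧
    StrictAntiOn ν (Icc (Q - s) Q) := by
  have : Nontrivial E := ⟨e, 0, norm_ne_zero_iff.1 (he ▸ one_ne_zero)⟩
  have hb : 0 < b := ha.trans_lt hab
  have hRQ : R ≤ Q := by linarith
  have hnorm {c : ℝ} (hc : 0 ≤ c) : ‖c • e‖ = c := by
    rw [norm_smul, he, mul_one, Real.norm_of_nonneg hc]
  have hRs : |R - s| ≤ Q - s := abs_le.2 ⟨by linarith, by linarith⟩
  have hQs : |Q - s| = Q - s := abs_of_nonneg (by linarith)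
  have hν_inner {c : ℝ} (hc : 0 ≤ c) (hcQ : c ≤ Q - s) :
      ν c = b * m.real (ball 0 s) - (b - a) * ballOverlap m (c • e) s R := by
    rw [hν, weightedAnnulus_real_ball_of_norm_add_le hRQ ha hb.le (by linarith [hnorm hc])]
  have hν_outer {c : ℝ} (hc : R + s ≤ c) : ν c = b * ballOverlap m (c • e) s Q := by
    rw [hν, weightedAnnulus_real_ball_of_add_le_norm hRQ ha hb.le (by rwa [hnorm (by linarith)])]
  have hν_plateau {c : ℝ} (hc : c ∈ Icc (R + s) (Q - s)) : ν c = b * m.real (ball 0 s) := by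
    have hc0 : 0 ≤ c := by linarith [hc.1]
    rw [hν_inner hc0 hc.2, ballOverlap.eq_zero_of_add_le_norm (hc.1.trans_eq (hnorm hc0).symm),
      mul_zero, sub_zero]
  refine ⟨fun c₁ h₁ c₂ h₂ => ?_, fun c hc d hd hcd => ?_, fun c₁ h₁ c₂ h₂ => ?_, fun c _ => ?_,
    fun c hc d hd hcd => ?_⟩
  · rw [hν_inner h₁.1 (h₁.2.trans hRs), hν_inner h₂.1 (h₂.2.trans hRs),
      ballOverlap.eq_of_norm_le_abs_sub ((hnorm h₁.1).trans_le h₁.2),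
      ballOverlap.eq_of_norm_le_abs_sub ((hnorm h₂.1).trans_le h₂.2)]
  · have hc0 : 0 ≤ c := (abs_nonneg _).trans hc.1
    rw [hν_inner hc0 (by linarith [hc.2]), hν_inner (hc0.trans hcd.le) (by linarith [hd.2])]
    exact sub_lt_sub_left
      (mul_lt_mul_of_pos_left (ballOverlap.strictAntiOn he hc hd hcd) (sub_pos.2 hab)) _
  · rw [hν_plateau h₁, hν_plateau h₂]
  · rw [hν_plateau ⟨le_rfl, by linarith⟩, hν]
    exact weightedAnnulus_real_ball_le hRQ ha hab.le
  · rw [hν_outer (by linarith [hd.1]), hν_outer (by linarith [hc.1])]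
    have hIcc : Icc (Q - s) Q ⊆ Icc |Q - s| (Q + s) := Icc_subset_Icc hQs.le (by linarith)
    exact mul_lt_mul_of_pos_left (ballOverlap.strictAntiOn he (hIcc hc) (hIcc hd) hcd) hb

lemma pc_eq_smul_single (c : ℝ) : pc c = c • EuclideanSpace.single 0 (1 : ℝ) := by
  ext i
  fin_cases i <;> simp [pc]

/-- For the weighted annulus measure `μ = W(R,Q,w)` with `a < b`, and
`0 < s ≤ (Q - R)/2`, the function `ν_s(c) = μ(B((c,0),s))` is: (i) constant on `[0, |R-s|]`;
(ii) strictly increasing on `[|R-s|, R+s]`; (iii) constant on `[R+s, Q-s]`, where it attains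
its maximum over `[0,Q]`; and (iv) strictly decreasing on `[Q-s, Q]`. -/
theorem weighted_annulus_nu_small_s
    (R Q w a b : ℝ) (hR : 0 < R) (hRQ : R < Q) (hw0 : 0 < w) (hw1 : w < 1)
    (ha : a = w / (Real.pi * R ^ 2))
    (hb : b = (1 - w) / (Real.pi * (Q ^ 2 - R ^ 2)))
    (hab : a < b)
    (μ : Measure (EuclideanSpace ℝ (Fin 2)))
    (hμ : μ = volume.withDensity (fun p =>
      if ‖p‖ < R then ENNReal.ofReal a else if ‖p‖ ≤ Q then ENNReal.ofReal b else 0))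
    (s : ℝ) (hs0 : 0 < s) (hs : s ≤ (Q - R) / 2)
    (ν : ℝ → ℝ) (hν : ∀ c, ν c = (μ (ball (pc c) s)).toReal) :
    (∀ c₁ ∈ Icc (0:ℝ) |R - s|, ∀ c₂ ∈ Icc (0:ℝ) |R - s|, ν c₁ = ν c₂) ∧
    StrictMonoOn ν (Icc |R - s| (R + s)) ∧
    (∀ c₁ ∈ Icc (R + s) (Q - s), ∀ c₂ ∈ Icc (R + s) (Q - s), ν c₁ = ν c₂) ∧
    (∀ c ∈ Icc (0:ℝ) Q, ν c ≤ ν (R + s)) ∧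
    StrictAntiOn ν (Icc (Q - s) Q) := by
  subst hμ
  have ha0 : 0 ≤ a := by rw [ha]; positivity
  exact weighted_annulus_nu_small_s_general (m := volume)
    (e := EuclideanSpace.single (0 : Fin 2) (1 : ℝ)) (by simp) hR.le ha0 hab hs0.le hs
    fun c => by rw [hν, pc_eq_smul_single]; rfl
end

section
/- Fix 0 < R < Q and suppose (Q − R)/2 < s < (Q + R)/2. Let A_{R,Q} = {p ∈ ℝ² : R ≤ ‖p‖ ≤ Q} and define γ : [0,Q] → ℝ by γ(c) = vol(A_{R,Q} ∩ B(p_c,s)). Let c* = √((R² + Q²)/2 − s²) (a well-defined positive real number under the hypotheses). Then γ attains its maximum over [0,Q] at c*: γ(c*) ≥ γ(c) for all c ∈ [0,Q]. -/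
open Set MeasureTheory Metric

/-!
Rotating, we may take both centres on a ray spanned by a unit vector `e`, and we slice by the
lines `z + ℝ e` with `z` orthogonal to `e`. Let `2w` be the length of the chord that such a line
cuts out of the ball. Moving the centre outwards along the ray removes the points `z + (t - w) e`
and adds the points `z + (t + w) e`, where `t` runs over the positions of the centre; the removed
point is the one nearer to the origin, and the squared norms of the two add up to `2 (t² + s²)`.
As long as this is at most `R² + Q²`, an added point lies in the annulus whenever the removed one
does; once it is at least `R² + Q²`, the converse implication holds.
-/

section RealLine

theorem measure_inter_Ioc_add_measure_inter_Ioc {α : Type*} [LinearOrder α] [TopologicalSpace α]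
    [OrderClosedTopology α] [MeasurableSpace α] [OpensMeasurableSpace α] (μ : Measure α)
    (T : Set α) {a b c : α} (hab : a ≤ b) (hbc : b ≤ c) :
    μ (T ∩ Ioc a b) + μ (T ∩ Ioc b c) = μ (T ∩ Ioc a c) := by
  have hleft : T ∩ Ioc a c ∩ Ioc a b = T ∩ Ioc a b := by
    rw [inter_assoc, inter_eq_right.2 (Ioc_subset_Ioc_right hbc)]
  have hright : (T ∩ Ioc a c) \ Ioc a b = T ∩ Ioc b c := by
    rw [inter_sdiff_assoc, ← Ioc_union_Ioc_eq_Ioc hab hbc, union_sdiff_left,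
      (Ioc_disjoint_Ioc_of_le le_rfl).symm.sdiff_eq_left]
  rw [← hleft, ← hright, measure_inter_add_sdiff _ measurableSet_Ioc]

variable {T : Set ℝ} {a b w : ℝ}

theorem volume_inter_ball_add_volume_inter_Ioc (hab : a ≤ b) (hw : 0 ≤ w) :
    volume (T ∩ ball a w) + volume (T ∩ Ioc (a + w) (b + w)) =
      volume (T ∩ Ioc (a - w) (b - w)) + volume (T ∩ ball b w) := by
  have volume_inter_ball (c : ℝ) :
      volume (T ∩ ball c w) = volume (T ∩ Ioc (c - w) (c + w)) := by
    rw [Real.ball_eq_Ioo]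
    exact measure_congr (.inter (.refl _ _) Ioo_ae_eq_Ioc)
  rw [volume_inter_ball, volume_inter_ball,
    measure_inter_Ioc_add_measure_inter_Ioc _ _ (by linarith) (by linarith),
    measure_inter_Ioc_add_measure_inter_Ioc _ _ (by linarith) (by linarith)]

theorem volume_inter_Ioc_le_of_add_mem {v : ℝ} (h : ∀ t ∈ Ioc a b, t ∈ T → t + v ∈ T) :
    volume (T ∩ Ioc a b) ≤ volume (T ∩ Ioc (a + v) (b + v)) := by
  rw [← measure_preimage_add_right volume v (T ∩ Ioc (a + v) (b + v))]
  exact measure_mono fun t ⟨htT, hta, htb⟩ ↦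
    ⟨h t ⟨hta, htb⟩ htT, add_lt_add_left hta v, add_le_add_left htb v⟩

theorem volume_inter_Ioc_ne_top : volume (T ∩ Ioc a b) ≠ ⊤ :=
  measure_ne_top_of_subset inter_subset_right measure_Ioc_lt_top.ne

theorem volume_inter_ball_le_of_sub_mem_imp_add_mem (hab : a ≤ b) (hw : 0 ≤ w)
    (h : ∀ t ∈ Icc a b, t - w ∈ T → t + w ∈ T) :
    volume (T ∩ ball a w) ≤ volume (T ∩ ball b w) := by
  have hlost : volume (T ∩ Ioc (a - w) (b - w)) ≤ volume (T ∩ Ioc (a + w) (b + w)) := by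
    convert volume_inter_Ioc_le_of_add_mem (v := 2 * w) fun t ht htT ↦ ?_ using 3
    · ring_nf
    · convert h (t + w) (by grind) (by simpa using htT) using 1
      ring
  refine ENNReal.le_of_add_le_add_right volume_inter_Ioc_ne_top
    ((add_le_add_right hlost _).trans_eq ?_)
  rw [volume_inter_ball_add_volume_inter_Ioc hab hw, add_comm]

theorem volume_inter_ball_le_of_add_mem_imp_sub_mem (hab : a ≤ b) (hw : 0 ≤ w)
    (h : ∀ t ∈ Icc a b, t + w ∈ T → t - w ∈ T) :
    volume (T ∩ ball b w) ≤ volume (T ∩ ball a w) := by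
  have hgained : volume (T ∩ Ioc (a + w) (b + w)) ≤ volume (T ∩ Ioc (a - w) (b - w)) := by
    convert volume_inter_Ioc_le_of_add_mem (v := -(2 * w)) fun t ht htT ↦ ?_ using 3
    · ring_nf
    · convert h (t - w) (by grind) (by simpa using htT) using 1
      ring
  refine ENNReal.le_of_add_le_add_left volume_inter_Ioc_ne_top
    ((add_le_add_left hgained _).trans_eq' ?_)
  rw [← volume_inter_ball_add_volume_inter_Ioc hab hw, add_comm]

end RealLine

section Slicing

variable {E : Type*} [NormedAddCommGroup E] [NormedSpace ℝ E] {e : E}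

theorem volume_line_add_smul (S : Set E) (z : E) (r : ℝ) :
    volume {t : ℝ | z + r • e + t • e ∈ S} = volume {t : ℝ | z + t • e ∈ S} := by
  rw [← measure_preimage_add volume r {t : ℝ | z + t • e ∈ S}]
  simp [add_smul, add_assoc]

variable [MeasurableSpace E] [BorelSpace E] [SecondCountableTopology E] (μ : Measure E) [SFinite μ]
  [μ.IsAddRightInvariant] (ℓ : E →L[ℝ] ℝ) {A B : Set E}

/-- Every line in direction `e` meets the slab `ℓ ⁻¹' [0, 1)` in unit length, so shifting along `e`
spreads each point of `A` over the slab with total weight one. -/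
theorem measure_eq_setLIntegral_volume_line (he : ℓ e = 1) (hA : MeasurableSet A) :
    μ A = ∫⁻ z in ℓ ⁻¹' Ico 0 1, volume {t : ℝ | z + t • e ∈ A} ∂μ := by
  set D : Set E := ℓ ⁻¹' Ico 0 1
  have hD : MeasurableSet D := ℓ.measurable measurableSet_Ico
  have volume_line_slab (z : E) : volume {t : ℝ | z - t • e ∈ D} = 1 := by
    have : {t : ℝ | z - t • e ∈ D} = Ioc (ℓ z - 1) (ℓ z) := by
      ext t
      simp [D, he, and_comm, sub_lt_comm]
    simp [this]
  have hadd : MeasurableSet {x : E × ℝ | x.1 + x.2 • e ∈ A} := hA.preimage (by fun_prop)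
  have hsub : MeasurableSet {x : E × ℝ | x.1 - x.2 • e ∈ D} := hD.preimage (by fun_prop)
  symm
  calc ∫⁻ z in D, volume {t : ℝ | z + t • e ∈ A} ∂μ
      = ∫⁻ t : ℝ, μ.restrict D {z | z + t • e ∈ A} :=
        (Measure.prod_apply hadd).symm.trans (Measure.prod_apply_symm hadd)
    _ = ∫⁻ t : ℝ, μ.restrict A {z | z - t • e ∈ D} := by
        refine lintegral_congr fun t ↦ ?_
        rw [Measure.restrict_apply' hD, Measure.restrict_apply' hA,
          ← measure_preimage_add_right μ (t • e) ({z | z - t • e ∈ D} ∩ A)]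
        simp [preimage, ofPred_inter_eq_sep, and_comm]
    _ = ∫⁻ z in A, volume {t : ℝ | z - t • e ∈ D} ∂μ :=
        (Measure.prod_apply_symm hsub).symm.trans (Measure.prod_apply hsub)
    _ = μ A := by simp [volume_line_slab]

theorem measure_le_of_forall_volume_line_le (he : ℓ e = 1) (hA : MeasurableSet A)
    (hB : MeasurableSet B)
    (h : ∀ z, ℓ z = 0 → volume {t : ℝ | z + t • e ∈ A} ≤ volume {t : ℝ | z + t • e ∈ B}) :
    μ A ≤ μ B := by
  rw [measure_eq_setLIntegral_volume_line μ ℓ he hA, measure_eq_setLIntegral_volume_line μ ℓ he hB]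
  refine lintegral_mono fun z ↦ ?_
  rw [← sub_add_cancel z (ℓ z • e), volume_line_add_smul, volume_line_add_smul]
  exact h _ (by simp [he])

end Slicing

section Annulus

/-- The closed annulus `A_{R,Q}` centred at the origin, in a space of any dimension. -/
def annulus (E : Type*) [Norm E] (R Q : ℝ) : Set E := {p | R ≤ ‖p‖ ∧ ‖p‖ ≤ Q}

variable {E : Type*} [NormedAddCommGroup E] {R Q : ℝ} {x y : E}

theorem isClosed_annulus : IsClosed (annulus E R Q) :=
  (isClosed_le continuous_const continuous_norm).inter
    (isClosed_le continuous_norm continuous_const)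

theorem mem_annulus_of_norm_le_of_le_sq_add_sq (hy : y ∈ annulus E R Q) (hxy : ‖x‖ ≤ ‖y‖)
    (h : R ^ 2 + Q ^ 2 ≤ ‖x‖ ^ 2 + ‖y‖ ^ 2) : x ∈ annulus E R Q := by
  have hyQ : ‖y‖ ^ 2 ≤ Q ^ 2 := by gcongr; exact hy.2
  exact ⟨le_of_sq_le_sq (by linarith) (norm_nonneg x), hxy.trans hy.2⟩

theorem mem_annulus_of_norm_le_of_sq_add_sq_le (hR : 0 ≤ R) (hx : x ∈ annulus E R Q)
    (hxy : ‖x‖ ≤ ‖y‖) (h : ‖x‖ ^ 2 + ‖y‖ ^ 2 ≤ R ^ 2 + Q ^ 2) : y ∈ annulus E R Q := by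
  have hxR : R ^ 2 ≤ ‖x‖ ^ 2 := by gcongr; exact hx.1
  exact ⟨hx.1.trans hxy, le_of_sq_le_sq (by linarith) ((norm_nonneg x).trans hx.2)⟩

variable [InnerProductSpace ℝ E] {e z : E} {s c d : ℝ}

theorem norm_add_smul_sq_of_inner_eq_zero (he : ‖e‖ = 1) (hz : inner ℝ e z = 0) (t : ℝ) :
    ‖z + t • e‖ ^ 2 = ‖z‖ ^ 2 + t ^ 2 := by
  rw [norm_add_sq_real, inner_smul_right, real_inner_comm, hz, norm_smul, he]
  simp

theorem setOf_line_mem_ball_eq_ball (he : ‖e‖ = 1) (hz : inner ℝ e z = 0) (hs : 0 ≤ s) :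
    {t : ℝ | z + t • e ∈ ball (c • e) s} = ball c √(s ^ 2 - ‖z‖ ^ 2) := by
  ext t
  have hnorm : ‖z + t • e - c • e‖ ^ 2 = ‖z‖ ^ 2 + (t - c) ^ 2 := by
    rw [add_sub_assoc, ← sub_smul, norm_add_smul_sq_of_inner_eq_zero he hz]
  rw [mem_ofPred_eq, mem_ball_iff_norm, mem_ball_iff_norm, Real.lt_sqrt (norm_nonneg _),
    ← sq_lt_sq₀ (norm_nonneg _) hs, hnorm, Real.norm_eq_abs, sq_abs, lt_sub_iff_add_lt']

theorem volume_line_annulus_inter_ball_le (hR : 0 ≤ R) (hs : 0 ≤ s) (he : ‖e‖ = 1)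
    (hz : inner ℝ e z = 0) (hc : 0 ≤ c) (hd : 0 ≤ d) (hds : d ^ 2 + s ^ 2 = (R ^ 2 + Q ^ 2) / 2) :
    volume {t : ℝ | z + t • e ∈ annulus E R Q ∩ ball (c • e) s} ≤
      volume {t : ℝ | z + t • e ∈ annulus E R Q ∩ ball (d • e) s} := by
  simp only [mem_inter_iff, ofPred_and, setOf_line_mem_ball_eq_ball he hz hs]
  rcases le_or_gt (s ^ 2) (‖z‖ ^ 2) with hzs | hzs
  · simp [Real.sqrt_eq_zero_of_nonpos (sub_nonpos.2 hzs)]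
  set w := √(s ^ 2 - ‖z‖ ^ 2)
  have hw : 0 ≤ w := Real.sqrt_nonneg _
  have hw_sq : w ^ 2 = s ^ 2 - ‖z‖ ^ 2 := Real.sq_sqrt (sub_nonneg.2 hzs.le)
  have sum_sq (t : ℝ) : ‖z + (t - w) • e‖ ^ 2 + ‖z + (t + w) • e‖ ^ 2 = 2 * (t ^ 2 + s ^ 2) := by
    simp only [norm_add_smul_sq_of_inner_eq_zero he hz]
    linear_combination 2 * hw_sq
  have norm_le {t : ℝ} (ht : 0 ≤ t) : ‖z + (t - w) • e‖ ≤ ‖z + (t + w) • e‖ := by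
    refine le_of_sq_le_sq ?_ (norm_nonneg _)
    simp only [norm_add_smul_sq_of_inner_eq_zero he hz]
    nlinarith [mul_nonneg ht hw]
  rcases le_total c d with hcd | hdc
  · refine volume_inter_ball_le_of_sub_mem_imp_add_mem hcd hw fun t ⟨hct, htd⟩ ht ↦ ?_
    have htd_sq : t ^ 2 ≤ d ^ 2 := pow_le_pow_left₀ (hc.trans hct) htd 2
    exact mem_annulus_of_norm_le_of_sq_add_sq_le hR ht (norm_le (hc.trans hct))
      (by linarith [sum_sq t])
  · refine volume_inter_ball_le_of_add_mem_imp_sub_mem hdc hw fun t ⟨hdt, _⟩ ht ↦ ?_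
    have hdt_sq : d ^ 2 ≤ t ^ 2 := pow_le_pow_left₀ hd hdt 2
    exact mem_annulus_of_norm_le_of_le_sq_add_sq ht (norm_le (hd.trans hdt))
      (by linarith [sum_sq t])

variable [FiniteDimensional ℝ E] [MeasurableSpace E] [BorelSpace E]

theorem volume_annulus_inter_ball_smul_le (hR : 0 ≤ R) (hs : 0 ≤ s) (he : ‖e‖ = 1)
    (hc : 0 ≤ c) (hd : 0 ≤ d) (hds : d ^ 2 + s ^ 2 = (R ^ 2 + Q ^ 2) / 2) :
    volume (annulus E R Q ∩ ball (c • e) s) ≤ volume (annulus E R Q ∩ ball (d • e) s) := by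
  have measurableSet_inter (p : E) : MeasurableSet (annulus E R Q ∩ ball p s) :=
    isClosed_annulus.measurableSet.inter measurableSet_ball
  exact measure_le_of_forall_volume_line_le volume (innerSL ℝ e)
    (by simp [he]) (measurableSet_inter _) (measurableSet_inter _)
    fun z hz ↦ volume_line_annulus_inter_ball_le hR hs he hz hc hd hds

theorem volume_annulus_inter_ball_congr_norm {p q : E} (h : ‖p‖ = ‖q‖) :
    volume (annulus E R Q ∩ ball p s) = volume (annulus E R Q ∩ ball q s) := by
  set ρ : E ≃ₗᵢ[ℝ] E := (ℝ ∙ (p - q))ᗮ.reflection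
  have hρ : ρ p = q := Submodule.reflection_sub h
  have preimage_annulus : ρ ⁻¹' annulus E R Q = annulus E R Q := by simp [annulus]
  have preimage_ball : ρ ⁻¹' ball q s = ball p s := by rw [← hρ, ρ.isometry.preimage_ball]
  rw [← ρ.measurePreserving.measure_preimage (s := annulus E R Q ∩ ball q s)
      (isClosed_annulus.measurableSet.inter measurableSet_ball).nullMeasurableSet,
    preimage_inter, preimage_annulus, preimage_ball]

end Annulus

theorem gamma_max_at_cstar_general {E : Type*} [NormedAddCommGroup E] [InnerProductSpace ℝ E]
    [FiniteDimensional ℝ E] [MeasurableSpace E] [BorelSpace E] {R Q s : ℝ} (hR : 0 ≤ R)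
    (hs : 0 ≤ s) {p : E} (hp : ‖p‖ ^ 2 + s ^ 2 = (R ^ 2 + Q ^ 2) / 2) (q : E) :
    volume (annulus E R Q ∩ ball q s) ≤ volume (annulus E R Q ∩ ball p s) := by
  rcases subsingleton_or_nontrivial E with _ | _
  · rw [Subsingleton.elim q p]
  obtain ⟨e, he⟩ := exists_norm_eq E zero_le_one
  calc volume (annulus E R Q ∩ ball q s)
      = volume (annulus E R Q ∩ ball (‖q‖ • e) s) :=
        volume_annulus_inter_ball_congr_norm (by simp [norm_smul, he])
    _ ≤ volume (annulus E R Q ∩ ball (‖p‖ • e) s) :=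
        volume_annulus_inter_ball_smul_le hR hs he (norm_nonneg q) (norm_nonneg p) hp
    _ = volume (annulus E R Q ∩ ball p s) :=
        volume_annulus_inter_ball_congr_norm (by simp [norm_smul, he])

theorem norm_pc (c : ℝ) : ‖pc c‖ = |c| := by
  simp [pc, EuclideanSpace.norm_eq, Real.sqrt_sq_eq_abs]

/-- For `(Q-R)/2 < s < (Q+R)/2`, the area
`γ(c) = vol(A_{R,Q} ∩ B((c,0),s))` attains its maximum over `[0,Q]` at
`c* = √((R² + Q²)/2 - s²)`, which is a well-defined positive real number. -/
theorem gamma_max_at_cstar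
    (R Q s : ℝ) (hR : 0 < R) (hRQ : R < Q)
    (hs1 : (Q - R) / 2 < s) (hs2 : s < (Q + R) / 2)
    (γ : ℝ → ℝ)
    (hγ : ∀ c, γ c =
      (volume ({p : EuclideanSpace ℝ (Fin 2) | R ≤ ‖p‖ ∧ ‖p‖ ≤ Q} ∩ ball (pc c) s)).toReal)
    (cstar : ℝ) (hcstar : cstar = Real.sqrt ((R ^ 2 + Q ^ 2) / 2 - s ^ 2)) :
    0 < cstar ∧ ∀ c ∈ Icc (0:ℝ) Q, γ c ≤ γ cstar := by
  have hs : 0 < s := by linarith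
  have hpos : 0 < (R ^ 2 + Q ^ 2) / 2 - s ^ 2 := by nlinarith [sq_nonneg (Q - R)]
  have hnorm : ‖pc cstar‖ ^ 2 + s ^ 2 = (R ^ 2 + Q ^ 2) / 2 := by
    rw [norm_pc, sq_abs, hcstar, Real.sq_sqrt hpos.le, sub_add_cancel]
  refine ⟨hcstar ▸ Real.sqrt_pos.2 hpos, fun c _ ↦ ?_⟩
  rw [hγ, hγ]
  exact ENNReal.toReal_mono (measure_ne_top_of_subset inter_subset_right measure_ball_lt_top.ne)
    (gamma_max_at_cstar_general hR.le hs.le hnorm (pc c))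
end
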